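/- For every integer n ≥ 1, the number of triples (a_1, a_2, a_3) of nonnegative integers with a_1 + a_2 + a_3 = 2n and N(a_1, a_2, a_3) ≠ 0 equals C(n+2, 2), where C denotes the binomial coefficient. -/

import Mathlib

/-- A word (list over `ℕ`) is down-up alternating if `w 1 > w 2 < w 3 > w 4 < ⋯`
(1-indexed). -/
def DownUpAlt (w : List ℕ) : Prop :=
  ∀ k : ℕ, k + 1 < w.length →
    if k % 2 = 0 then w.getD (k + 1) 0 < w.getD k 0 else w.getD k 0 < w.getD (k + 1) 0

/-- `N3 a b c` is the number of down-up alternating words over `{1,2,3}` that are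
empty or have first letter `≥ 2`, containing exactly `a` ones, `b` twos and
`c` threes. -/
noncomputable def N3 (a b c : ℕ) : ℕ :=
  Nat.card {w : List ℕ // (∀ x ∈ w, 1 ≤ x ∧ x ≤ 3) ∧ DownUpAlt w ∧
    (w = [] ∨ 2 ≤ w.headI) ∧
    w.count 1 = a ∧ w.count 2 = b ∧ w.count 3 = c}

lemma downUpAlt_cons_cons (a b : ℕ) (w : List ℕ) :
    DownUpAlt (a :: b :: w) ↔ b < a ∧ (w = [] ∨ b < w.headI) ∧ DownUpAlt w := by
  constructor
  · intro h
    refine ⟨by simpa using h 0 (by simp), ?_, fun k hk => ?_⟩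
    · cases w with
      | nil => simp
      | cons c w => simpa using h 1 (by simp)
    · simpa [Nat.add_mod_right] using h (k + 2) (by simp only [List.length_cons]; omega)
  · rintro ⟨hab, hw, h⟩ k hk
    match k with
    | 0 => simpa using hab
    | 1 =>
      cases w with
      | nil => simp at hk
      | cons c w => simpa using hw
    | k + 2 => simpa [Nat.add_mod_right] using h k (by simp only [List.length_cons] at hk; omega)

lemma DownUpAlt.count_le {n : ℕ} {w : List ℕ} (h : DownUpAlt w) (hw : w.length = 2 * n)
    (x : ℕ) : w.count x ≤ n := by
  induction n generalizing w with
  | zero => simp_all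
  | succ n ih =>
    match w, hw with
    | a :: b :: w, hw =>
      obtain ⟨hab, -, h⟩ := (downUpAlt_cons_cons a b w).1 h
      have := ih h (by simp at hw; omega)
      simp only [List.count_cons, beq_iff_eq]
      split_ifs <;> omega

lemma length_eq_count_add {w : List ℕ} (h : ∀ x ∈ w, 1 ≤ x ∧ x ≤ 3) :
    w.length = w.count 1 + w.count 2 + w.count 3 := by
  induction w with
  | nil => simp
  | cons a w ih =>
    have ih := ih fun x hx => h x (by simp [hx])
    have ha := h a (by simp)
    simp only [List.count_cons, beq_iff_eq, List.length_cons]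
    split_ifs <;> omega

/-- The down-up words built from `k` blocks `32` and `j` blocks `31`. -/
lemma exists_downUpAlt_head_three (j k : ℕ) : ∃ w : List ℕ, (∀ x ∈ w, 1 ≤ x ∧ x ≤ 3) ∧
    DownUpAlt w ∧ (w = [] ∨ w.headI = 3) ∧
    w.count 1 = j ∧ w.count 2 = k ∧ w.count 3 = j + k := by
  induction j with
  | zero =>
    induction k with
    | zero => exact ⟨[], by simp [DownUpAlt]⟩
    | succ k ih =>
      obtain ⟨w, hx, h, hw, h1, h2, h3⟩ := ih
      refine ⟨3 :: 2 :: w, by simpa using hx,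
        (downUpAlt_cons_cons ..).2 ⟨by norm_num, hw.imp id (by omega), h⟩, by simp, ?_⟩
      simp [h1, h2, h3]
  | succ j ih =>
    obtain ⟨w, hx, h, hw, h1, h2, h3⟩ := ih
    refine ⟨3 :: 1 :: w, by simpa using hx,
      (downUpAlt_cons_cons ..).2 ⟨by norm_num, hw.imp id (by omega), h⟩, by simp, ?_⟩
    simp [h1, h2, h3]
    omega

/-- The down-up words built from `i` blocks `21`, `j` blocks `31` and `k` blocks `32`. -/
lemma exists_downUpAlt (i j k : ℕ) : ∃ w : List ℕ, (∀ x ∈ w, 1 ≤ x ∧ x ≤ 3) ∧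
    DownUpAlt w ∧ (w = [] ∨ 2 ≤ w.headI) ∧
    w.count 1 = i + j ∧ w.count 2 = i + k ∧ w.count 3 = j + k := by
  induction i with
  | zero =>
    obtain ⟨w, hx, h, hw, h1, h2, h3⟩ := exists_downUpAlt_head_three j k
    exact ⟨w, hx, h, hw.imp id (by omega), by omega, by omega, h3⟩
  | succ i ih =>
    obtain ⟨w, hx, h, hw, h1, h2, h3⟩ := ih
    refine ⟨2 :: 1 :: w, by simpa using hx,
      (downUpAlt_cons_cons ..).2 ⟨by norm_num, hw.imp id (by omega), h⟩, by simp, ?_⟩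
    simp [h1, h2, h3]
    omega

lemma N3_ne_zero_iff_exists (a b c : ℕ) : N3 a b c ≠ 0 ↔
    ∃ w : List ℕ, (∀ x ∈ w, 1 ≤ x ∧ x ≤ 3) ∧ DownUpAlt w ∧ (w = [] ∨ 2 ≤ w.headI) ∧
      w.count 1 = a ∧ w.count 2 = b ∧ w.count 3 = c := by
  have hfin : {w : List ℕ | (∀ x ∈ w, 1 ≤ x ∧ x ≤ 3) ∧ DownUpAlt w ∧
      (w = [] ∨ 2 ≤ w.headI) ∧
      w.count 1 = a ∧ w.count 2 = b ∧ w.count 3 = c}.Finite := by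
    refine (List.finite_toSet (List.replicate a 1 ++ List.replicate b 2 ++
      List.replicate c 3).permutations).subset ?_
    rintro w ⟨hx, -, -, h1, h2, h3⟩
    rw [Set.mem_ofPred_eq, List.mem_permutations, List.perm_iff_count]
    intro x
    by_cases hxw : x ∈ w
    · obtain ⟨hl, hu⟩ := hx x hxw
      interval_cases x <;> simp [List.count_replicate, h1, h2, h3]
    · have h0 := List.count_eq_zero.2 hxw
      simp only [List.count_append, List.count_replicate, beq_iff_eq, h0]
      split_ifs <;> subst_vars <;> omega
  have := hfin.to_subtype
  rw [N3, Nat.card_ne_zero, nonempty_subtype]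
  exact and_iff_left this

lemma N3_ne_zero_iff {n a b c : ℕ} (h : a + b + c = 2 * n) :
    N3 a b c ≠ 0 ↔ a ≤ n ∧ b ≤ n ∧ c ≤ n := by
  rw [N3_ne_zero_iff_exists]
  constructor
  · rintro ⟨w, hx, hw, -, rfl, rfl, rfl⟩
    have hl := (length_eq_count_add hx).trans h
    exact ⟨hw.count_le hl 1, hw.count_le hl 2, hw.count_le hl 3⟩
  · rintro ⟨ha, hb, hc⟩
    obtain ⟨w, hx, hw, hd, h1, h2, h3⟩ := exists_downUpAlt (n - c) (n - b) (n - a)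
    exact ⟨w, hx, hw, hd, by omega, by omega, by omega⟩

lemma card_triples_le (n : ℕ) :
    Nat.card {t : ℕ × ℕ × ℕ // t.1 + t.2.1 + t.2.2 = 2 * n ∧
      t.1 ≤ n ∧ t.2.1 ≤ n ∧ t.2.2 ≤ n} = (n + 2).choose 2 := by
  let e : {t : ℕ × ℕ × ℕ // t.1 + t.2.1 + t.2.2 = 2 * n ∧
      t.1 ≤ n ∧ t.2.1 ≤ n ∧ t.2.2 ≤ n} ≃ Σ s : Fin (n + 1), Fin (s + 1) :=
    { toFun := fun t => ⟨⟨t.1.2.2, by have := t.2; omega⟩,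
        ⟨n - t.1.1, by have := t.2; simp only; omega⟩⟩
      invFun := fun p => ⟨(n - p.2, n - (p.1 - p.2), p.1), by
        have := p.1.2; have := p.2.2; simp only; omega⟩
      left_inv := by
        rintro ⟨⟨a, b, c⟩, h⟩
        simp only at h
        simp only [Subtype.mk.injEq, Prod.mk.injEq, and_true]
        omega
      right_inv := by
        rintro ⟨⟨s, hs⟩, ⟨k, hk⟩⟩
        simp only [Sigma.mk.injEq, heq_eq_eq, Fin.mk.injEq, true_and] at hk ⊢
        omega }
  rw [Nat.card_congr e, Nat.card_eq_fintype_card, Fintype.card_sigma]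
  simp only [Fintype.card_fin]
  rw [Fin.sum_univ_eq_sum_range (fun s => s + 1) (n + 1), Nat.choose_two_right,
    ← Finset.sum_range_id, Finset.sum_range_succ' _ (n + 1), add_zero]

theorem stmt18 (n : ℕ) (hn : 1 ≤ n) :
    Nat.card {t : ℕ × ℕ × ℕ //
      t.1 + t.2.1 + t.2.2 = 2 * n ∧ N3 t.1 t.2.1 t.2.2 ≠ 0} =
      Nat.choose (n + 2) 2 := by
  rw [← card_triples_le n]
  exact Nat.card_congr (Equiv.subtypeEquivRight fun t =>
    and_congr_right fun h => N3_ne_zero_iff h)
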